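/- On ℝ³ with coordinates (x,y,z) (with sinh y ≠ 0), consider the anti-de Sitter metric g = κ²(−cosh²y·dx² + dy² + sinh²y·dz²) for a constant κ > 0, which has scalar curvature τ = −6/κ². For any constants c₁, c₂ (not both zero) and any Λ ∈ ℝ, the function h(x,y,z) = κ²Λ/2 + sinh(y)(c₁cos(z) + c₂sin(z)) satisfies the vacuum weighted Einstein field equation h·ρ − Hes_h + (Δh + Λ)g = 0; moreover ‖∇h‖² = (1/κ²)(cosh²(y)(c₂sin z + c₁cos z)² + (c₂cos z − c₁sin z)²) > 0, so ∇h is spacelike. -/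

import Mathlib

noncomputable section
open Matrix

/-- Points of the coordinate space `ℝⁿ`. -/
abbrev Pt (n : ℕ) := Fin n → ℝ

/-- Partial derivative `∂_i f` in the `i`-th coordinate direction. -/
def pd {n : ℕ} (i : Fin n) (f : Pt n → ℝ) (p : Pt n) : ℝ :=
  fderiv ℝ f p (Pi.single i 1)

/-- The inverse metric `g^{ij}` of a metric `g` given as a matrix of components. -/
def ginv {n : ℕ} (g : Pt n → Fin n → Fin n → ℝ) (p : Pt n) : Matrix (Fin n) (Fin n) ℝ :=
  (Matrix.of (g p))⁻¹

/-- Christoffel symbols `Γ^k_{ij}` of the Levi-Civita connection of `g`. -/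
def chr {n : ℕ} (g : Pt n → Fin n → Fin n → ℝ) (k i j : Fin n) (p : Pt n) : ℝ :=
  (1/2) * ∑ l, ginv g p k l *
    (pd i (fun q => g q l j) p + pd j (fun q => g q l i) p - pd l (fun q => g q i j) p)

/-- Components `R_{ij}` of the Ricci tensor of `g`. -/
def RicciT {n : ℕ} (g : Pt n → Fin n → Fin n → ℝ) (i j : Fin n) (p : Pt n) : ℝ :=
  (∑ k, pd k (fun q => chr g k i j q) p) - (∑ k, pd j (fun q => chr g k i k q) p)
  + (∑ k, ∑ l, chr g k k l p * chr g l i j p) - (∑ k, ∑ l, chr g k j l p * chr g l i k p)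

/-- Scalar curvature `τ = g^{ij} R_{ij}` of `g`. -/
def Scal {n : ℕ} (g : Pt n → Fin n → Fin n → ℝ) (p : Pt n) : ℝ :=
  ∑ i, ∑ j, ginv g p i j * RicciT g i j p

/-- Components of the Hessian `Hes_f` of a function `f` with respect to `g`. -/
def Hess {n : ℕ} (g : Pt n → Fin n → Fin n → ℝ) (f : Pt n → ℝ) (i j : Fin n) (p : Pt n) : ℝ :=
  pd i (fun q => pd j f q) p - ∑ k, chr g k i j p * pd k f p

/-- Laplacian `Δf = g^{ij}(Hes_f)_{ij}`. -/
def Lap {n : ℕ} (g : Pt n → Fin n → Fin n → ℝ) (f : Pt n → ℝ) (p : Pt n) : ℝ :=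
  ∑ i, ∑ j, ginv g p i j * Hess g f i j p

/-- Components of the gradient `∇f = g^{ij} ∂_j f ∂_i`. -/
def gradV {n : ℕ} (g : Pt n → Fin n → Fin n → ℝ) (f : Pt n → ℝ) (p : Pt n) (i : Fin n) : ℝ :=
  ∑ j, ginv g p i j * pd j f p

/-- `‖∇f‖² = g(∇f,∇f) = g^{ij} ∂_i f ∂_j f`. -/
def gradNorm2 {n : ℕ} (g : Pt n → Fin n → Fin n → ℝ) (f : Pt n → ℝ) (p : Pt n) : ℝ :=
  ∑ i, ∑ j, ginv g p i j * pd i f p * pd j f p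

/-- The vacuum weighted Einstein field equation
`h·ρ − Hes_h + (Δh + Λ)g = 0` at the point `p`. -/
def WEFEat {n : ℕ} (g : Pt n → Fin n → Fin n → ℝ) (h : Pt n → ℝ) (Λ : ℝ) (p : Pt n) : Prop :=
  ∀ i j, h p * RicciT g i j p - Hess g h i j p + (Lap g h p + Λ) * g p i j = 0

/-- The Ricci operator `Ric = g^{-1}·ρ` as a matrix (column `j` lists the
components of `Ric ∂_j`). -/
def RicOpM {n : ℕ} (g : Pt n → Fin n → Fin n → ℝ) (p : Pt n) : Matrix (Fin n) (Fin n) ℝ :=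
  Matrix.of fun i j => ∑ k, ginv g p i k * RicciT g k j p

/-- The `k`-th component of the covariant derivative `∇_{∂_i} V`. -/
def covD {n : ℕ} (g : Pt n → Fin n → Fin n → ℝ) (V : Pt n → Fin n → ℝ) (i k : Fin n)
    (p : Pt n) : ℝ :=
  pd i (fun q => V q k) p + ∑ m, chr g k i m p * V p m

/-- Components `R^l_{ijk}` of the (1,3)-curvature tensor:
`R(∂_i,∂_j)∂_k = R^l_{ijk} ∂_l`. -/
def RiemUp {n : ℕ} (g : Pt n → Fin n → Fin n → ℝ) (l i j k : Fin n) (p : Pt n) : ℝ :=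
  pd i (fun q => chr g l j k q) p - pd j (fun q => chr g l i k q) p
  + (∑ m, chr g l i m p * chr g m j k p) - (∑ m, chr g l j m p * chr g m i k p)

/-- The (0,4)-curvature tensor `R(∂_i,∂_j,∂_k,∂_l) = g(R(∂_i,∂_j)∂_k, ∂_l)`. -/
def RiemLow {n : ℕ} (g : Pt n → Fin n → Fin n → ℝ) (i j k l : Fin n) (p : Pt n) : ℝ :=
  ∑ m, g p l m * RiemUp g m i j k p

/-- A symmetric matrix of Lorentzian signature `(−,+,+)`. -/
def IsLorentz3 (A : Matrix (Fin 3) (Fin 3) ℝ) : Prop :=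
  A.IsSymm ∧ ∃ P : Matrix (Fin 3) (Fin 3) ℝ, IsUnit P.det ∧
    Pᵀ * A * P = Matrix.diagonal ![(-1 : ℝ), 1, 1]

/-- Jacobian matrix of a coordinate change `ψ`. -/
def jac {n : ℕ} (ψ : Pt n → Pt n) (q : Pt n) : Matrix (Fin n) (Fin n) ℝ :=
  Matrix.of fun i j => pd j (fun r => ψ r i) q

/-- Pullback `ψ^*g` of the metric `g` under the coordinate change `ψ`. -/
def pullback {n : ℕ} (g : Pt n → Fin n → Fin n → ℝ) (ψ : Pt n → Pt n) (q : Pt n) :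
    Matrix (Fin n) (Fin n) ℝ :=
  (jac ψ q)ᵀ * Matrix.of (g (ψ q)) * jac ψ q

/-- The 3-dimensional plane-wave metric `dv(2du − (α''(v)/α(v))x² dv) + dx²`
in coordinates `(u,v,x) = (q 0, q 1, q 2)`. -/
def planeWaveM (α : ℝ → ℝ) (q : Pt 3) : Matrix (Fin 3) (Fin 3) ℝ :=
  Matrix.of fun i j =>
    if i = 0 ∧ j = 1 then 1 else if i = 1 ∧ j = 0 then 1
    else if i = 1 ∧ j = 1 then -(deriv (deriv α) (q 1) / α (q 1)) * (q 2)^2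
    else if i = 2 ∧ j = 2 then 1 else 0


/-- The anti-de Sitter metric `κ²(−cosh²y dx² + dy² + sinh²y dz²)` in
coordinates `(x,y,z) = (p 0, p 1, p 2)`. -/
def antiDeSitterM (κ : ℝ) (p : Pt 3) : Fin 3 → Fin 3 → ℝ := fun i j =>
  if i = 0 ∧ j = 0 then -(κ^2 * Real.cosh (p 1)^2)
  else if i = 1 ∧ j = 1 then κ^2
  else if i = 2 ∧ j = 2 then κ^2 * Real.sinh (p 1)^2 else 0

/-!
Anti-de Sitter space is a multiply warped product over the `y`-line with warping functions `cosh`,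
`1` and `sinh`, so its Christoffel symbols and Ricci tensor are expressed through the logarithmic
derivatives of these functions, and `ρ = -(2/κ²) g`. For `h = a + sinh y · u(z)` the identities
`sinh'' = sinh` and `u'' = -u` give `Hes_h = ((h - a)/κ²) g`. Both tensors being multiples of `g`,
the field equation is a single scalar identity, which forces `a = κ²Λ/2`. The gradient is spacelike
because `κ²‖∇h‖² = (sinh² y) u² + (u² + u'²)`, where `u² + u'² = c₁² + c₂²`.
-/

open scoped Topology

lemma deriv_logDeriv {F : ℝ → ℝ} {t : ℝ} (hF : DifferentiableAt ℝ F t)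
    (hF' : DifferentiableAt ℝ (deriv F) t) (h0 : F t ≠ 0) :
    deriv (logDeriv F) t = deriv (deriv F) t / F t - logDeriv F t ^ 2 := by
  rw [logDeriv, deriv_div hF' hF h0, Pi.div_apply]
  field_simp

section CoordinateDerivatives

variable {n : ℕ} {p : Pt n}

lemma pd_congr {f g : Pt n → ℝ} (h : f =ᶠ[𝓝 p] g) (i : Fin n) : pd i f p = pd i g p := by
  simp only [pd, h.fderiv_eq]

lemma pd_const (c : ℝ) (i : Fin n) : pd i (fun _ => c) p = 0 := by
  simp [pd]

lemma pd_const_add (a : ℝ) (f : Pt n → ℝ) (i : Fin n) :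
    pd i (fun q => a + f q) p = pd i f p := by
  simp only [pd, fderiv_const_add]

lemma pd_mul {f g : Pt n → ℝ} (hf : DifferentiableAt ℝ f p) (hg : DifferentiableAt ℝ g p)
    (i : Fin n) : pd i (fun q => f q * g q) p = f p * pd i g p + pd i f p * g p := by
  simp [pd, fderiv_fun_mul hf hg, mul_comm]

/- Junk values agree: since `t ↦ update p j t` is a section of the `j`-th coordinate, `q ↦ F (q j)`
is differentiable at `p` only if `F` is at `p j`; otherwise both sides are `0`. -/
lemma pd_comp_apply (F : ℝ → ℝ) (i j : Fin n) :
    pd i (fun q => F (q j)) p = if i = j then deriv F (p j) else 0 := by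
  by_cases hF : DifferentiableAt ℝ F (p j)
  · have h : HasFDerivAt (fun q : Pt n => F (q j)) _ p :=
      hF.hasDerivAt.comp_hasFDerivAt p (hasFDerivAt_apply (𝕜 := ℝ) j p)
    simp [pd, h.fderiv, Pi.single_apply, eq_comm]
  · have hFj : ¬DifferentiableAt ℝ (fun q : Pt n => F (q j)) p := by
      intro h
      rw [← Function.update_eq_self j p] at h
      have hline := h.comp (p j) (hasDerivAt_update p j (p j)).differentiableAt
      exact hF (by simpa [Function.comp_def] using hline)
    simp [pd, fderiv_zero_of_not_differentiableAt hFj, deriv_zero_of_not_differentiableAt hF]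

lemma pd_mul_separated {F G : ℝ → ℝ} {F' G' : ℝ} {j k : Fin n} (hF : HasDerivAt F F' (p j))
    (hG : HasDerivAt G G' (p k)) (i : Fin n) :
    pd i (fun q => F (q j) * G (q k)) p =
      (if i = j then F' * G (p k) else 0) + (if i = k then F (p j) * G' else 0) := by
  have hFj : DifferentiableAt ℝ (fun q : Pt n => F (q j)) p :=
    (HasDerivAt.comp_hasFDerivAt p hF (hasFDerivAt_apply (𝕜 := ℝ) j p)).differentiableAt
  have hGk : DifferentiableAt ℝ (fun q : Pt n => G (q k)) p :=
    (HasDerivAt.comp_hasFDerivAt p hG (hasFDerivAt_apply (𝕜 := ℝ) k p)).differentiableAt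
  rw [pd_mul hFj hGk, pd_comp_apply, pd_comp_apply, hF.deriv, hG.deriv, add_comm, ite_mul,
    mul_ite, zero_mul, mul_zero]

end CoordinateDerivatives

section MetricTraces

variable {n : ℕ} {g : Pt n → Fin n → Fin n → ℝ} {p : Pt n}

lemma sum_ginv_mul_smul_metric (hg : (Matrix.of (g p)).IsSymm)
    (hdet : IsUnit (Matrix.of (g p)).det) (a : ℝ) :
    ∑ i, ∑ j, ginv g p i j * (a * g p i j) = n * a := by
  have htrace : ∑ i, ∑ j, ginv g p i j * g p i j = n := by
    calc ∑ i, ∑ j, ginv g p i j * g p i j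
        = (ginv g p * (Matrix.of (g p))ᵀ).trace := Matrix.sum_hadamard_eq _ (Matrix.of (g p))
      _ = n := by
          rw [hg.eq, ginv, Matrix.nonsing_inv_mul _ hdet, Matrix.trace_one, Fintype.card_fin]
  simp only [← htrace, Finset.sum_mul, mul_comm a, mul_assoc]

lemma Scal_eq_of_ricciT_eq_smul (hg : (Matrix.of (g p)).IsSymm)
    (hdet : IsUnit (Matrix.of (g p)).det) {r : ℝ} (hr : ∀ i j, RicciT g i j p = r * g p i j) :
    Scal g p = n * r := by
  simp only [Scal, hr, sum_ginv_mul_smul_metric hg hdet]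

lemma Lap_eq_of_hess_eq_smul {h : Pt n → ℝ} (hg : (Matrix.of (g p)).IsSymm)
    (hdet : IsUnit (Matrix.of (g p)).det) {s : ℝ} (hs : ∀ i j, Hess g h i j p = s * g p i j) :
    Lap g h p = n * s := by
  simp only [Lap, hs, sum_ginv_mul_smul_metric hg hdet]

lemma WEFEat_of_ricciT_eq_smul_of_hess_eq_smul {h : Pt n → ℝ} {Λ r s : ℝ}
    (hg : (Matrix.of (g p)).IsSymm) (hdet : IsUnit (Matrix.of (g p)).det)
    (hr : ∀ i j, RicciT g i j p = r * g p i j) (hs : ∀ i j, Hess g h i j p = s * g p i j)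
    (hΛ : h p * r + (n - 1) * s + Λ = 0) : WEFEat g h Λ p := by
  intro i j
  rw [hr, hs, Lap_eq_of_hess_eq_smul hg hdet hs]
  linear_combination g p i j * hΛ

end MetricTraces

/-- The diagonal metric `∑ᵢ εᵢ fᵢ(t)² (dxⁱ)²` on `ℝⁿ`, where `t = p m` is the `m`-th coordinate.
For `f m = 1` it is a multiply warped product over the `t`-line. -/
def warpedMetric {n : ℕ} (ε : Fin n → ℝ) (f : Fin n → ℝ → ℝ) (m : Fin n) (p : Pt n) :
    Fin n → Fin n → ℝ :=
  Matrix.diagonal fun i => ε i * f i (p m) ^ 2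

/-- The Christoffel symbols `Γ^k_{ij}` of `warpedMetric ε f m` as functions of the coordinate `t`
on which the metric depends. -/
def warpedChristoffel {n : ℕ} (ε : Fin n → ℝ) (f : Fin n → ℝ → ℝ) (m k i j : Fin n) (t : ℝ) : ℝ :=
  (if i = m then if k = j then logDeriv (f k) t else 0 else 0)
    + (if j = m then if k = i then logDeriv (f k) t else 0 else 0)
    - (if k = m then if i = j then ε i / ε m * (f i t * deriv (f i) t) / f m t ^ 2 else 0 else 0)

section WarpedMetric

variable {n : ℕ} {ε : Fin n → ℝ} {f : Fin n → ℝ → ℝ} {m : Fin n} {p : Pt n}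

lemma isSymm_warpedMetric (ε : Fin n → ℝ) (f : Fin n → ℝ → ℝ) (m : Fin n) (p : Pt n) :
    (Matrix.of (warpedMetric ε f m p)).IsSymm :=
  Matrix.isSymm_diagonal _

lemma isUnit_det_warpedMetric (hε : ∀ i, ε i ≠ 0) (hf : ∀ i, f i (p m) ≠ 0) :
    IsUnit (Matrix.of (warpedMetric ε f m p)).det := by
  change IsUnit (Matrix.diagonal fun i => ε i * f i (p m) ^ 2).det
  rw [Matrix.det_diagonal, isUnit_iff_ne_zero, Finset.prod_ne_zero_iff]
  exact fun i _ => mul_ne_zero (hε i) (pow_ne_zero 2 (hf i))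

lemma ginv_warpedMetric (hε : ∀ i, ε i ≠ 0) (hf : ∀ i, f i (p m) ≠ 0) :
    ginv (warpedMetric ε f m) p = Matrix.diagonal fun i => (ε i * f i (p m) ^ 2)⁻¹ := by
  refine Matrix.inv_eq_right_inv ?_
  change Matrix.diagonal _ * Matrix.diagonal _ = 1
  rw [Matrix.diagonal_mul_diagonal, ← Matrix.diagonal_one]
  congr 1
  funext i
  exact mul_inv_cancel₀ (mul_ne_zero (hε i) (pow_ne_zero 2 (hf i)))

lemma pd_warpedMetric {i : Fin n} (hf : DifferentiableAt ℝ (f i) (p m)) (l j : Fin n) :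
    pd l (fun q => warpedMetric ε f m q i j) p =
      if l = m then if i = j then 2 * (ε i * (f i (p m) * deriv (f i) (p m))) else 0 else 0 := by
  by_cases hij : i = j
  · have hderiv : deriv (fun t => ε i * f i t ^ 2) (p m)
        = 2 * (ε i * (f i (p m) * deriv (f i) (p m))) := by
      rw [((hf.hasDerivAt.fun_pow 2).const_mul (ε i)).deriv]
      push_cast
      ring
    subst hij
    simp only [warpedMetric, Matrix.diagonal_apply_eq, if_true, ← hderiv]
    exact pd_comp_apply (fun t => ε i * f i t ^ 2) l m
  · simp [warpedMetric, hij, pd_const]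

lemma chr_warpedMetric (hε : ∀ i, ε i ≠ 0) (hf : ∀ i, f i (p m) ≠ 0)
    (hd : ∀ i, DifferentiableAt ℝ (f i) (p m)) (k i j : Fin n) :
    chr (warpedMetric ε f m) k i j p = warpedChristoffel ε f m k i j (p m) := by
  have hεk := hε k
  have hfk := hf k
  simp only [chr, ginv_warpedMetric hε hf, pd_warpedMetric (hd _), Matrix.diagonal_apply, ite_mul,
    zero_mul, Finset.sum_ite_eq, Finset.mem_univ, if_true, warpedChristoffel, logDeriv_apply]
  split_ifs <;> subst_vars <;> field_simp <;> ring

lemma gradNorm2_warpedMetric (hε : ∀ i, ε i ≠ 0) (hf : ∀ i, f i (p m) ≠ 0) (h : Pt n → ℝ) :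
    gradNorm2 (warpedMetric ε f m) h p = ∑ i, pd i h p ^ 2 / (ε i * f i (p m) ^ 2) := by
  simp only [gradNorm2, ginv_warpedMetric hε hf, Matrix.diagonal_apply, ite_mul, zero_mul,
    Finset.sum_ite_eq, Finset.mem_univ, if_true]
  exact Finset.sum_congr rfl fun i _ => by ring

lemma Hess_warpedMetric (hε : ∀ i, ε i ≠ 0) (hf : ∀ i, f i (p m) ≠ 0)
    (hd : ∀ i, DifferentiableAt ℝ (f i) (p m)) (h : Pt n → ℝ) (i j : Fin n) :
    Hess (warpedMetric ε f m) h i j p = pd i (pd j h) p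
      - (if i = m then logDeriv (f j) (p m) * pd j h p else 0)
      - (if j = m then logDeriv (f i) (p m) * pd i h p else 0)
      + (if i = j then
          ε i / ε m * (f i (p m) * deriv (f i) (p m)) / f m (p m) ^ 2 * pd m h p else 0) := by
  simp only [Hess, chr_warpedMetric hε hf hd, warpedChristoffel, sub_mul, add_mul, ite_mul,
    zero_mul, Finset.sum_sub_distrib, Finset.sum_add_distrib]
  by_cases hi : i = m <;> by_cases hj : j = m <;>
    simp only [hi, hj, ↓reduceIte, Finset.sum_ite_eq', Finset.mem_univ, Finset.sum_const_zero,
      add_zero, sub_zero, zero_add, ite_self, zero_sub, sub_neg_eq_add] <;>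
    ring

lemma pd_chr_warpedMetric (hε : ∀ i, ε i ≠ 0) (hf : ∀ i, f i (p m) ≠ 0)
    (hd : ∀ i, ∀ᶠ t in 𝓝 (p m), DifferentiableAt ℝ (f i) t) (l k i j : Fin n) :
    pd l (fun q => chr (warpedMetric ε f m) k i j q) p =
      if l = m then deriv (warpedChristoffel ε f m k i j) (p m) else 0 := by
  rw [← pd_comp_apply]
  refine pd_congr ?_ l
  have hnear : ∀ᶠ t in 𝓝 (p m), ∀ i, f i t ≠ 0 ∧ DifferentiableAt ℝ (f i) t :=
    Filter.eventually_all.2 fun i =>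
      ((hd i).self_of_nhds.continuousAt.eventually_ne (hf i)).and (hd i)
  filter_upwards [(continuous_apply m).continuousAt.eventually hnear] with q hq
  exact chr_warpedMetric hε (fun i => (hq i).1) (fun i => (hq i).2) k i j

lemma warpedChristoffel_comm (ε : Fin n → ℝ) (f : Fin n → ℝ → ℝ) (m k i j : Fin n) :
    warpedChristoffel ε f m k i j = warpedChristoffel ε f m k j i := by
  funext t
  unfold warpedChristoffel
  rw [add_comm]
  congr 1
  by_cases hij : i = j
  · rw [hij]
  · simp [hij, Ne.symm hij]

lemma warpedChristoffel_base (hm : f m = 1) (i j : Fin n) :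
    warpedChristoffel ε f m m i j =
      fun t => if i = j then -(ε i / ε m * (f i t * deriv (f i) t)) else 0 := by
  funext t
  by_cases hij : i = j <;> simp [warpedChristoffel, hm, hij, logDeriv_apply]

lemma warpedChristoffel_contract (hm : f m = 1) (k i : Fin n) :
    warpedChristoffel ε f m k i k = fun t => if i = m then logDeriv (f k) t else 0 := by
  funext t
  by_cases hk : k = m
  · subst hk
    by_cases hi : i = k <;> simp [warpedChristoffel, hm, hi, logDeriv_apply]
  · simp [warpedChristoffel, hk]

lemma deriv_warpedChristoffel_base (hm : f m = 1) {i : Fin n} {t : ℝ}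
    (hd : DifferentiableAt ℝ (f i) t) (hd' : DifferentiableAt ℝ (deriv (f i)) t) (j : Fin n) :
    deriv (warpedChristoffel ε f m m i j) t =
      if i = j then -(ε i / ε m * (deriv (f i) t ^ 2 + f i t * deriv (deriv (f i)) t)) else 0 := by
  rw [warpedChristoffel_base hm]
  split_ifs
  · rw [((hd.hasDerivAt.fun_mul hd'.hasDerivAt).const_mul (ε i / ε m)).fun_neg.deriv, sq]
  · exact deriv_const t 0

lemma sum_deriv_warpedChristoffel_contract (hm : f m = 1) {t : ℝ} (hf : ∀ k, f k t ≠ 0)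
    (hd : ∀ k, DifferentiableAt ℝ (f k) t) (hd' : ∀ k, DifferentiableAt ℝ (deriv (f k)) t)
    (i : Fin n) :
    ∑ k, deriv (warpedChristoffel ε f m k i k) t =
      if i = m then ∑ k, deriv (deriv (f k)) t / f k t - ∑ k, logDeriv (f k) t ^ 2 else 0 := by
  simp only [warpedChristoffel_contract hm, ← Finset.sum_sub_distrib]
  split_ifs
  · exact Finset.sum_congr rfl fun k _ => deriv_logDeriv (hd k) (hd' k) (hf k)
  · simp only [deriv_const, Finset.sum_const_zero]

lemma sum_warpedChristoffel_trace_mul (hm : f m = 1) (i j : Fin n) (t : ℝ) :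
    ∑ k, ∑ l, warpedChristoffel ε f m k k l t * warpedChristoffel ε f m l i j t =
      if i = j then -(ε i / ε m * (f i t * deriv (f i) t) * ∑ k, logDeriv (f k) t) else 0 := by
  have htrace : ∀ k l, warpedChristoffel ε f m k k l t = if l = m then logDeriv (f k) t else 0 :=
    fun k l => by rw [warpedChristoffel_comm, warpedChristoffel_contract hm]
  simp only [htrace, ite_mul, zero_mul, Finset.sum_ite_eq', Finset.mem_univ, if_true,
    ← Finset.sum_mul, warpedChristoffel_base hm]
  rw [mul_ite, mul_zero, mul_neg, mul_comm]

lemma sum_warpedChristoffel_mul (hm : f m = 1) (i j : Fin n) (t : ℝ) :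
    ∑ k, ∑ l, warpedChristoffel ε f m k j l t * warpedChristoffel ε f m l i k t =
      (if i = j then if i = m then ∑ k, logDeriv (f k) t ^ 2 else 0 else 0)
        - (if i = j then 2 * (ε i / ε m * (f i t * deriv (f i) t)) * logDeriv (f i) t else 0) := by
  have hone : logDeriv (1 : ℝ → ℝ) t = 0 := by simp [logDeriv_apply]
  by_cases hi : i = m <;> by_cases hj : j = m
  · simp [warpedChristoffel, hm, hone, hi, hj, add_mul, mul_add, Finset.sum_add_distrib, sq]
  · simp [warpedChristoffel, hm, hone, hi, hj, Ne.symm hj, sub_mul, mul_add,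
      Finset.sum_add_distrib]
  · simp [warpedChristoffel, hm, hi, hj, Ne.symm hi, mul_sub, add_mul]
  · by_cases hij : i = j
    · simp only [warpedChristoffel, hj, ↓reduceIte, zero_add, hm, Pi.one_apply, one_pow, div_one,
        hij, mul_sub, mul_ite, sub_mul, ite_mul, zero_mul, mul_zero, Finset.sum_sub_distrib,
        Finset.sum_ite_irrel, Finset.sum_ite_eq', Finset.mem_univ, zero_sub, Finset.sum_const_zero,
        ite_self, sub_zero, Finset.sum_ite_eq]
      ring
    · simp [warpedChristoffel, hi, hj, hij, Ne.symm hij, sub_mul, mul_sub]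

lemma RicciT_warpedMetric (hε : ∀ i, ε i ≠ 0) (hf : ∀ i, f i (p m) ≠ 0)
    (hd : ∀ i, ContDiffAt ℝ 2 (f i) (p m)) (hm : f m = 1) (i j : Fin n) :
    RicciT (warpedMetric ε f m) i j p =
      if i = j then
        ε i / ε m * (deriv (f i) (p m) ^ 2 - f i (p m) * deriv (deriv (f i)) (p m)
          - f i (p m) * deriv (f i) (p m) * ∑ k, logDeriv (f k) (p m))
        - (if i = m then ∑ k, deriv (deriv (f k)) (p m) / f k (p m) else 0)
      else 0 := by
  have hd₀ : ∀ i, ∀ᶠ t in 𝓝 (p m), DifferentiableAt ℝ (f i) t := fun i =>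
    ((hd i).eventually (by simp)).mono fun t ht => ht.differentiableAt two_ne_zero
  have hd₁ : ∀ i, DifferentiableAt ℝ (f i) (p m) := fun i => (hd₀ i).self_of_nhds
  have hd₂ : ∀ i, DifferentiableAt ℝ (deriv (f i)) (p m) := fun i =>
    ((hd i).derivWithin (m := 1) le_rfl).differentiableAt one_ne_zero
  have hdiv : ∑ k, pd k (fun q => chr (warpedMetric ε f m) k i j q) p =
      deriv (warpedChristoffel ε f m m i j) (p m) := by
    simp [pd_chr_warpedMetric hε hf hd₀]
  have htrace : ∑ k, pd j (fun q => chr (warpedMetric ε f m) k i k q) p =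
      if j = m then ∑ k, deriv (warpedChristoffel ε f m k i k) (p m) else 0 := by
    simp only [pd_chr_warpedMetric hε hf hd₀]
    split_ifs <;> simp
  simp only [RicciT, hdiv, htrace, chr_warpedMetric hε hf hd₁,
    deriv_warpedChristoffel_base hm (hd₁ i) (hd₂ i),
    sum_deriv_warpedChristoffel_contract hm hf hd₁ hd₂, sum_warpedChristoffel_trace_mul hm,
    sum_warpedChristoffel_mul hm, logDeriv_apply]
  by_cases hij : i = j
  · subst hij
    have hfi := hf i
    by_cases hi : i = m
    · simp [hi, hm]
    · simp only [↓reduceIte, hi, sub_zero, zero_sub, sub_neg_eq_add]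
      field_simp
      ring
  · have hm' : ¬(j = m ∧ i = m) := fun h => hij (h.2.trans h.1.symm)
    simp [hij, ← ite_and, hm']

end WarpedMetric


/-- The constants `εᵢ` of the anti-de Sitter metric, written as a `warpedMetric`. -/
def antiDeSitterCoeff (κ : ℝ) : Fin 3 → ℝ := ![-κ ^ 2, κ ^ 2, κ ^ 2]

/-- The warping functions `fᵢ` of the anti-de Sitter metric, written as a `warpedMetric`. -/
def antiDeSitterWarping : Fin 3 → ℝ → ℝ := ![Real.cosh, 1, Real.sinh]

section AntiDeSitter

variable {κ : ℝ} {p : Pt 3}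

lemma antiDeSitterM_eq_warpedMetric (κ : ℝ) :
    antiDeSitterM κ = warpedMetric (antiDeSitterCoeff κ) antiDeSitterWarping 1 := by
  funext p i j
  fin_cases i <;> fin_cases j <;>
    simp [antiDeSitterM, warpedMetric, antiDeSitterCoeff, antiDeSitterWarping]

lemma antiDeSitterCoeff_ne_zero (hκ : κ ≠ 0) (i : Fin 3) : antiDeSitterCoeff κ i ≠ 0 := by
  fin_cases i <;> simp [antiDeSitterCoeff, hκ]

lemma antiDeSitterWarping_ne_zero {t : ℝ} (ht : Real.sinh t ≠ 0) (i : Fin 3) :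
    antiDeSitterWarping i t ≠ 0 := by
  fin_cases i
  exacts [(Real.cosh_pos t).ne', one_ne_zero, ht]

lemma contDiff_antiDeSitterWarping (i : Fin 3) : ContDiff ℝ 2 (antiDeSitterWarping i) := by
  fin_cases i
  exacts [Real.contDiff_cosh, contDiff_const, Real.contDiff_sinh]

lemma isSymm_antiDeSitterM (κ : ℝ) (p : Pt 3) : (Matrix.of (antiDeSitterM κ p)).IsSymm := by
  rw [antiDeSitterM_eq_warpedMetric]
  exact isSymm_warpedMetric _ _ _ _

lemma isUnit_det_antiDeSitterM (hκ : κ ≠ 0) (hp : Real.sinh (p 1) ≠ 0) :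
    IsUnit (Matrix.of (antiDeSitterM κ p)).det := by
  rw [antiDeSitterM_eq_warpedMetric]
  exact isUnit_det_warpedMetric (antiDeSitterCoeff_ne_zero hκ) (antiDeSitterWarping_ne_zero hp)

lemma RicciT_antiDeSitterM (hκ : κ ≠ 0) (hp : Real.sinh (p 1) ≠ 0) (i j : Fin 3) :
    RicciT (antiDeSitterM κ) i j p = -(2 / κ ^ 2) * antiDeSitterM κ p i j := by
  have hcosh : Real.cosh (p 1) ≠ 0 := (Real.cosh_pos _).ne'
  have hlog : ∑ k, logDeriv (antiDeSitterWarping k) (p 1) =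
      Real.sinh (p 1) / Real.cosh (p 1) + Real.cosh (p 1) / Real.sinh (p 1) := by
    simp [antiDeSitterWarping, Fin.sum_univ_three, logDeriv_apply]
  have hsecond : ∑ k, deriv (deriv (antiDeSitterWarping k)) (p 1) / antiDeSitterWarping k (p 1) =
      2 := by
    simp [antiDeSitterWarping, Fin.sum_univ_three, hcosh, hp, one_add_one_eq_two]
  rw [antiDeSitterM_eq_warpedMetric, RicciT_warpedMetric (antiDeSitterCoeff_ne_zero hκ)
    (antiDeSitterWarping_ne_zero hp) (fun i => (contDiff_antiDeSitterWarping i).contDiffAt) rfl,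
    warpedMetric, Matrix.diagonal_apply, mul_ite, mul_zero, hlog, hsecond]
  congr 1
  fin_cases i
  · change -κ ^ 2 / κ ^ 2 * (deriv Real.cosh (p 1) ^ 2
      - Real.cosh (p 1) * deriv (deriv Real.cosh) (p 1)
      - Real.cosh (p 1) * deriv Real.cosh (p 1) * _) - 0 =
        -(2 / κ ^ 2) * (-κ ^ 2 * Real.cosh (p 1) ^ 2)
    rw [Real.deriv_cosh, Real.deriv_sinh]
    field_simp
    ring
  · change κ ^ 2 / κ ^ 2 * (deriv (1 : ℝ → ℝ) (p 1) ^ 2 - 1 * deriv (deriv (1 : ℝ → ℝ)) (p 1)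
      - 1 * deriv (1 : ℝ → ℝ) (p 1) * _) - 2 = -(2 / κ ^ 2) * (κ ^ 2 * 1 ^ 2)
    rw [deriv_one, deriv_zero, Pi.zero_apply]
    field_simp
    ring
  · change κ ^ 2 / κ ^ 2 * (deriv Real.sinh (p 1) ^ 2
      - Real.sinh (p 1) * deriv (deriv Real.sinh) (p 1)
      - Real.sinh (p 1) * deriv Real.sinh (p 1) * _) - 0 =
        -(2 / κ ^ 2) * (κ ^ 2 * Real.sinh (p 1) ^ 2)
    rw [Real.deriv_sinh, Real.deriv_cosh]
    field_simp
    ring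

lemma pd_const_add_sinh_mul {u u' : ℝ → ℝ} (hu : ∀ z, HasDerivAt u (u' z) z) (a : ℝ) (i : Fin 3) :
    pd i (fun q : Pt 3 => a + Real.sinh (q 1) * u (q 2)) = fun q =>
      (if i = 1 then Real.cosh (q 1) * u (q 2) else 0)
        + (if i = 2 then Real.sinh (q 1) * u' (q 2) else 0) := by
  funext q
  rw [pd_const_add, pd_mul_separated (Real.hasDerivAt_sinh _) (hu _)]

lemma Hess_antiDeSitterM (hκ : κ ≠ 0) (hp : Real.sinh (p 1) ≠ 0) {u u' : ℝ → ℝ}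
    (hu : ∀ z, HasDerivAt u (u' z) z) (hu' : ∀ z, HasDerivAt u' (-u z) z) (a : ℝ) (i j : Fin 3) :
    Hess (antiDeSitterM κ) (fun q => a + Real.sinh (q 1) * u (q 2)) i j p =
      Real.sinh (p 1) * u (p 2) / κ ^ 2 * antiDeSitterM κ p i j := by
  have hcu := pd_mul_separated (Real.hasDerivAt_cosh (p 1)) (hu (p 2))
  have hsu := pd_mul_separated (Real.hasDerivAt_sinh (p 1)) (hu' (p 2))
  have hmixed : Real.cosh (p 1) / Real.sinh (p 1) * (Real.sinh (p 1) * u' (p 2)) =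
      Real.cosh (p 1) * u' (p 2) := by
    field_simp
  have hxx : -(Real.cosh (p 1) * Real.sinh (p 1) * (Real.cosh (p 1) * u (p 2))) =
      Real.sinh (p 1) * u (p 2) / κ ^ 2 * -(κ ^ 2 * Real.cosh (p 1) ^ 2) := by
    field_simp
  have hyy : Real.sinh (p 1) * u (p 2) = Real.sinh (p 1) * u (p 2) / κ ^ 2 * κ ^ 2 := by
    field_simp
  have hzz : -(Real.sinh (p 1) * u (p 2))
      + Real.sinh (p 1) * Real.cosh (p 1) * (Real.cosh (p 1) * u (p 2)) =
        Real.sinh (p 1) * u (p 2) / κ ^ 2 * (κ ^ 2 * Real.sinh (p 1) ^ 2) := by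
    field_simp
    linear_combination u (p 2) * Real.cosh_sq (p 1)
  rw [antiDeSitterM_eq_warpedMetric, Hess_warpedMetric (antiDeSitterCoeff_ne_zero hκ)
    (antiDeSitterWarping_ne_zero hp)
    fun i => (contDiff_antiDeSitterWarping i).differentiable two_ne_zero _,
    ← antiDeSitterM_eq_warpedMetric]
  simp only [pd_const_add_sinh_mul hu]
  fin_cases i <;> fin_cases j <;>
    simp [antiDeSitterM, antiDeSitterCoeff, antiDeSitterWarping, logDeriv_apply, hcu, hsu,
      pd_const, hκ, hmixed, ← hxx, ← hyy, ← hzz]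

lemma gradNorm2_antiDeSitterM (hκ : κ ≠ 0) (hp : Real.sinh (p 1) ≠ 0) {u u' : ℝ → ℝ}
    (hu : ∀ z, HasDerivAt u (u' z) z) (a : ℝ) :
    gradNorm2 (antiDeSitterM κ) (fun q => a + Real.sinh (q 1) * u (q 2)) p =
      1 / κ ^ 2 * (Real.cosh (p 1) ^ 2 * u (p 2) ^ 2 + u' (p 2) ^ 2) := by
  rw [antiDeSitterM_eq_warpedMetric, gradNorm2_warpedMetric (antiDeSitterCoeff_ne_zero hκ)
    (antiDeSitterWarping_ne_zero hp)]
  simp only [pd_const_add_sinh_mul hu, Fin.sum_univ_three]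
  change (0 + 0) ^ 2 / _ + (Real.cosh (p 1) * u (p 2) + 0) ^ 2 / (κ ^ 2 * 1 ^ 2)
    + (0 + Real.sinh (p 1) * u' (p 2)) ^ 2 / (κ ^ 2 * Real.sinh (p 1) ^ 2) = _
  field_simp
  ring

lemma Scal_antiDeSitterM (hκ : κ ≠ 0) (hp : Real.sinh (p 1) ≠ 0) :
    Scal (antiDeSitterM κ) p = -(6 / κ ^ 2) := by
  rw [Scal_eq_of_ricciT_eq_smul (isSymm_antiDeSitterM κ p) (isUnit_det_antiDeSitterM hκ hp)
    (RicciT_antiDeSitterM hκ hp)]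
  push_cast
  ring

lemma WEFEat_antiDeSitterM (hκ : κ ≠ 0) (hp : Real.sinh (p 1) ≠ 0) {u u' : ℝ → ℝ}
    (hu : ∀ z, HasDerivAt u (u' z) z) (hu' : ∀ z, HasDerivAt u' (-u z) z) (Λ : ℝ) :
    WEFEat (antiDeSitterM κ) (fun q => κ ^ 2 * Λ / 2 + Real.sinh (q 1) * u (q 2)) Λ p := by
  refine WEFEat_of_ricciT_eq_smul_of_hess_eq_smul (isSymm_antiDeSitterM κ p)
    (isUnit_det_antiDeSitterM hκ hp) (RicciT_antiDeSitterM hκ hp)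
    (Hess_antiDeSitterM hκ hp hu hu' _) ?_
  push_cast
  field_simp
  ring

lemma gradNorm2_antiDeSitterM_pos (hκ : κ ≠ 0) (hp : Real.sinh (p 1) ≠ 0) {u u' : ℝ → ℝ}
    (hu : ∀ z, HasDerivAt u (u' z) z) (h0 : 0 < u (p 2) ^ 2 + u' (p 2) ^ 2) (a : ℝ) :
    0 < gradNorm2 (antiDeSitterM κ) (fun q => a + Real.sinh (q 1) * u (q 2)) p := by
  have hcosh : Real.cosh (p 1) ^ 2 * u (p 2) ^ 2 + u' (p 2) ^ 2 =
      (Real.sinh (p 1) * u (p 2)) ^ 2 + (u (p 2) ^ 2 + u' (p 2) ^ 2) := by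
    rw [Real.cosh_sq]
    ring
  rw [gradNorm2_antiDeSitterM hκ hp hu, hcosh]
  positivity

end AntiDeSitter

section Oscillator

lemma hasDerivAt_mul_cos_add_mul_sin (c₁ c₂ z : ℝ) :
    HasDerivAt (fun z => c₁ * Real.cos z + c₂ * Real.sin z)
      (c₂ * Real.cos z - c₁ * Real.sin z) z := by
  refine (((Real.hasDerivAt_cos z).const_mul c₁).fun_add
    ((Real.hasDerivAt_sin z).const_mul c₂)).congr_deriv ?_
  ring

lemma hasDerivAt_mul_cos_sub_mul_sin (c₁ c₂ z : ℝ) :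
    HasDerivAt (fun z => c₂ * Real.cos z - c₁ * Real.sin z)
      (-(c₁ * Real.cos z + c₂ * Real.sin z)) z := by
  refine (((Real.hasDerivAt_cos z).const_mul c₂).fun_sub
    ((Real.hasDerivAt_sin z).const_mul c₁)).congr_deriv ?_
  ring

lemma mul_cos_add_mul_sin_sq_add_sq (c₁ c₂ z : ℝ) :
    (c₁ * Real.cos z + c₂ * Real.sin z) ^ 2 + (c₂ * Real.cos z - c₁ * Real.sin z) ^ 2 =
      c₁ ^ 2 + c₂ ^ 2 := by
  linear_combination (c₁ ^ 2 + c₂ ^ 2) * Real.sin_sq_add_cos_sq z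

end Oscillator

/-- On anti-de Sitter 3-space (at points with `sinh y ≠ 0`)
the scalar curvature is `−6/κ²`, and for any constants `c₁, c₂` not both
zero and any `Λ`, the function `h = κ²Λ/2 + sinh y (c₁ cos z + c₂ sin z)`
satisfies the vacuum weighted Einstein field equation; moreover
`‖∇h‖² = (1/κ²)(cosh²y (c₂ sin z + c₁ cos z)² + (c₂ cos z − c₁ sin z)²) > 0`,
so `∇h` is spacelike. -/
theorem antiDeSitter_solutions (κ Λ c₁ c₂ : ℝ) (hκ : 0 < κ)
    (hc : ¬(c₁ = 0 ∧ c₂ = 0)) :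
    ∀ p : Pt 3, Real.sinh (p 1) ≠ 0 →
      Scal (antiDeSitterM κ) p = -(6 / κ^2) ∧
      WEFEat (antiDeSitterM κ)
        (fun q => κ^2 * Λ / 2 +
          Real.sinh (q 1) * (c₁ * Real.cos (q 2) + c₂ * Real.sin (q 2))) Λ p ∧
      gradNorm2 (antiDeSitterM κ)
        (fun q => κ^2 * Λ / 2 +
          Real.sinh (q 1) * (c₁ * Real.cos (q 2) + c₂ * Real.sin (q 2))) p =
        (1 / κ^2) * (Real.cosh (p 1)^2 *
            (c₂ * Real.sin (p 2) + c₁ * Real.cos (p 2))^2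
          + (c₂ * Real.cos (p 2) - c₁ * Real.sin (p 2))^2) ∧
      0 < gradNorm2 (antiDeSitterM κ)
        (fun q => κ^2 * Λ / 2 +
          Real.sinh (q 1) * (c₁ * Real.cos (q 2) + c₂ * Real.sin (q 2))) p := by
  intro p hp
  have hu := hasDerivAt_mul_cos_add_mul_sin c₁ c₂
  have hu' := hasDerivAt_mul_cos_sub_mul_sin c₁ c₂
  have hc' : 0 < (c₁ * Real.cos (p 2) + c₂ * Real.sin (p 2)) ^ 2
      + (c₂ * Real.cos (p 2) - c₁ * Real.sin (p 2)) ^ 2 := by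
    rw [mul_cos_add_mul_sin_sq_add_sq]
    rcases not_and_or.1 hc with hc₁ | hc₂ <;> positivity
  refine ⟨Scal_antiDeSitterM hκ.ne' hp, WEFEat_antiDeSitterM hκ.ne' hp hu hu' Λ, ?_,
    gradNorm2_antiDeSitterM_pos hκ.ne' hp hu hc' _⟩
  rw [gradNorm2_antiDeSitterM hκ.ne' hp hu, add_comm (c₂ * Real.sin (p 2))]
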